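/- Suppose γ > 0 and β < 0. Then for every Floquet exponent ξ ∈ (0, 1/2] there exists k > 0 such that ω(−1+ξ) = ω(1+ξ), where c₀ = γ/k² + βk² and ω(x) = k²·x·(c₀ − βk²x²) − γ/x. -/

import Mathlib

/-- Dispersion function of the linearized Ostrovsky equation,
with `c₀ = γ/k² + βk²` built in. -/
noncomputable def omega (γ β k x : ℝ) : ℝ :=
  k^2 * x * ((γ/k^2 + β*k^2) - β*k^2*x^2) - γ/x

/-!
Substituting `c₀` gives `ω(x) = γ(x - 1/x) + βk⁴(x - x³)`, so after division by `x - y` the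
collision condition `ω(x) = ω(y)` becomes linear in `k⁴`. For `x = -1 + ξ` and `y = 1 + ξ` a common
factor `ξ²` cancels, leaving `3βk⁴(ξ² - 1) = γ`, and `k` is a fourth root of the solution.
-/

section Dispersion

variable {γ β k x y : ℝ}

lemma omega_eq_add (hk : k ≠ 0) :
    omega γ β k x = γ * (x - 1 / x) + β * k ^ 4 * (x - x ^ 3) := by
  unfold omega
  field_simp
  ring

lemma omega_sub_omega (hk : k ≠ 0) (hx : x ≠ 0) (hy : y ≠ 0) :
    omega γ β k x - omega γ β k y =
      (x - y) * (γ * (1 + 1 / (x * y)) - β * k ^ 4 * (x ^ 2 + x * y + y ^ 2 - 1)) := by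
  rw [omega_eq_add hk, omega_eq_add hk]
  field_simp
  ring

lemma omega_eq_omega_iff (hk : k ≠ 0) (hx : x ≠ 0) (hy : y ≠ 0) (hxy : x ≠ y) :
    omega γ β k x = omega γ β k y ↔
      β * k ^ 4 * (x ^ 2 + x * y + y ^ 2 - 1) = γ * (1 + 1 / (x * y)) := by
  rw [← sub_eq_zero, omega_sub_omega hk hx hy, mul_eq_zero_iff_left (sub_ne_zero.mpr hxy),
    sub_eq_zero, eq_comm]

lemma omega_neg_one_add_eq_omega_one_add {ξ : ℝ} (hk : k ≠ 0) (hξ : ξ ^ 2 - 1 ≠ 0)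
    (hcollision : 3 * (β * (ξ ^ 2 - 1)) * k ^ 4 = γ) :
    omega γ β k (-1 + ξ) = omega γ β k (1 + ξ) := by
  have hfactor : (-1 + ξ) * (1 + ξ) = ξ ^ 2 - 1 := by ring
  obtain ⟨hleft, hright⟩ : -1 + ξ ≠ 0 ∧ 1 + ξ ≠ 0 := mul_ne_zero_iff.mp (hfactor ▸ hξ)
  rw [omega_eq_omega_iff hk hleft hright (by linarith), hfactor, ← hcollision]
  field_simp
  ring

end Dispersion

theorem m11_collision_neg_beta_general {γ β ξ : ℝ} (h : 0 < γ * (β * (ξ ^ 2 - 1))) :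
    ∃ k : ℝ, 0 < k ∧ omega γ β k (-1 + ξ) = omega γ β k (1 + ξ) := by
  have hcoeff : β * (ξ ^ 2 - 1) ≠ 0 := right_ne_zero_of_mul h.ne'
  have hpos : 0 < γ / (3 * (β * (ξ ^ 2 - 1))) := by
    rcases pos_and_pos_or_neg_and_neg_of_mul_pos h with ⟨hγ, hc⟩ | ⟨hγ, hc⟩
    · exact div_pos hγ (by linarith)
    · exact div_pos_of_neg_of_neg hγ (by linarith)
  obtain ⟨k, hk, hk4⟩ : ∃ k : ℝ, 0 < k ∧ k ^ 4 = γ / (3 * (β * (ξ ^ 2 - 1))) :=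
    ⟨_, Real.rpow_pos_of_pos hpos _, Real.rpow_inv_natCast_pow hpos.le four_ne_zero⟩
  refine ⟨k, hk, omega_neg_one_add_eq_omega_one_add hk.ne' (right_ne_zero_of_mul hcoeff) ?_⟩
  rw [hk4, mul_div_cancel₀ _ (mul_ne_zero three_ne_zero hcoeff)]

theorem m11_collision_neg_beta (γ β : ℝ) (hγ : 0 < γ) (hβ : β < 0) :
    ∀ ξ : ℝ, 0 < ξ → ξ ≤ 1/2 →
      ∃ k : ℝ, 0 < k ∧ omega γ β k (-1 + ξ) = omega γ β k (1 + ξ) := fun _ _ _ ↦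
  m11_collision_neg_beta_general (mul_pos hγ (mul_pos_of_neg_of_neg hβ (by nlinarith)))
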